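/- arXiv:2307.08283 — 3 statements merged into one kernel-verified Lean document; each statement's English description precedes it below -/
import Mathlib

section
/- Let n, N, m be positive integers and let X be an n×N real matrix. Then the infimum over all n×m real matrices W of the squared Frobenius reconstruction error ‖X − W Wᵀ X‖_F² (the PCA-style symmetric autoencoder loss) equals the infimum over all pairs of an n×m real matrix W₂ and an m×n real matrix W₁ of ‖X − W₂ W₁ X‖_F² (the linear autoencoder loss). That is, ⨅_{W ∈ ℝ^{n×m}} ‖X − W Wᵀ X‖_F² = ⨅_{W₂ ∈ ℝ^{n×m}, W₁ ∈ ℝ^{m×n}} ‖X − W₂ W₁ X‖_F². -/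
open Matrix BigOperators

/-- The Frobenius norm of a real matrix: the square root of the sum of the
squares of all entries. -/
noncomputable def frobeniusNorm {p q : ℕ} (A : Matrix (Fin p) (Fin q) ℝ) : ℝ :=
  Real.sqrt (∑ i, ∑ j, (A i j) ^ 2)

/-!
Write `G = W₂ᵀ W₂` and let `B` be the square root of the pseudoinverse of `G`. Then `W = W₂ B` is
the isometric part of the polar decomposition of `W₂`, and `W Wᵀ = W₂ B² W₂ᵀ` is the orthogonal
projection onto the column space of `W₂`. By Pythagoras, `W Wᵀ X` is at least as close to `X` as
any matrix with columns in that space, in particular as `W₂ W₁ X` for every `W₁`. Conversely, every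
symmetric autoencoder is the linear autoencoder with `W₁ = Wᵀ`.
-/

section RangeProjection

open scoped ComplexOrder

variable {m n 𝕜 : Type*} [Fintype m] [Fintype n] [RCLike 𝕜]

theorem exists_isHermitian_mul_sq_mul_eq_of_posSemidef {G : Matrix n n 𝕜} (hG : G.PosSemidef) :
    ∃ B : Matrix n n 𝕜, B.IsHermitian ∧ G * (B * B) * G = G := by
  classical
  have hG_selfAdjoint : IsSelfAdjoint G := hG.isHermitian
  -- The convention `0⁻¹ = 0` makes `f` vanish on the kernel of `G`.
  let f : ℝ → ℝ := fun t ↦ (√t)⁻¹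
  have hf : ContinuousOn f (spectrum ℝ G) := finite_real_spectrum.continuousOn f
  have hf_inv : (spectrum ℝ G).EqOn (fun t ↦ t * (f t * f t) * t) fun t ↦ t := by
    intro t ht
    rw [hG.isHermitian.spectrum_real_eq_range_eigenvalues] at ht
    obtain ⟨i, rfl⟩ := ht
    have hsq := Real.mul_self_sqrt (hG.eigenvalues_nonneg i)
    simp only [f, ← mul_inv, hsq, mul_inv_mul_cancel]
  refine ⟨cfc f G, cfc_predicate f G, ?_⟩
  calc G * (cfc f G * cfc f G) * G
      = cfc (fun t ↦ t * (f t * f t) * t) G := by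
        rw [cfc_mul (fun t ↦ t * (f t * f t)) (fun t ↦ t) G,
          cfc_mul (fun t ↦ t) (fun t ↦ f t * f t) G, cfc_mul f f G, cfc_id' ℝ G]
    _ = G := by rw [cfc_congr hf_inv, cfc_id' ℝ G]

theorem exists_isStarProjection_mul_conjTranspose_mul_eq_self (A : Matrix m n 𝕜) :
    ∃ W : Matrix m n 𝕜, IsStarProjection (W * Wᴴ) ∧ W * Wᴴ * A = A := by
  classical
  obtain ⟨B, hB, hGBG⟩ :=
    exists_isHermitian_mul_sq_mul_eq_of_posSemidef (posSemidef_conjTranspose_mul_self A)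
  have hW : A * B * (A * B)ᴴ = A * (B * B) * Aᴴ := by
    simp only [conjTranspose_mul, hB.eq, Matrix.mul_assoc]
  have hfix : A * B * (A * B)ᴴ * A = A := by
    rw [hW, ← sub_eq_zero]
    have hker : Aᴴ * A * ((B * B) * (Aᴴ * A) - 1) = 0 := by
      rw [Matrix.mul_sub, ← Matrix.mul_assoc, hGBG, Matrix.mul_one, sub_self]
    simpa only [Matrix.mul_sub, Matrix.mul_one, Matrix.mul_assoc] using
      (conjTranspose_mul_self_mul_eq_zero A _).mp hker
  refine ⟨A * B, ⟨?_, isHermitian_mul_conjTranspose_self (A * B)⟩, hfix⟩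
  calc A * B * (A * B)ᴴ * (A * B * (A * B)ᴴ)
      = A * B * (A * B)ᴴ * A * (B * (A * B)ᴴ) := by simp only [Matrix.mul_assoc]
    _ = A * B * (A * B)ᴴ := by rw [hfix, Matrix.mul_assoc]

end RangeProjection

section FrobeniusNorm

variable {p q : ℕ}

theorem frobeniusNorm_sq_eq_trace (A : Matrix (Fin p) (Fin q) ℝ) :
    frobeniusNorm A ^ 2 = (Aᵀ * A).trace := by
  rw [frobeniusNorm, Real.sq_sqrt (by positivity), Finset.sum_comm]
  simp only [trace, diag_apply, mul_apply, transpose_apply, sq]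

theorem frobeniusNorm_add_sq_of_transpose_mul_eq_zero {A B : Matrix (Fin p) (Fin q) ℝ}
    (h : Aᵀ * B = 0) :
    frobeniusNorm (A + B) ^ 2 = frobeniusNorm A ^ 2 + frobeniusNorm B ^ 2 := by
  have h' : Bᵀ * A = 0 := by simpa using congrArg transpose h
  simp only [frobeniusNorm_sq_eq_trace, transpose_add, Matrix.add_mul, Matrix.mul_add, h, h',
    add_zero, zero_add, trace_add]

theorem frobeniusNorm_sub_mul_sq_le_of_isStarProjection {P : Matrix (Fin p) (Fin p) ℝ}
    (hP : IsStarProjection P) (X : Matrix (Fin p) (Fin q) ℝ) {Y : Matrix (Fin p) (Fin q) ℝ}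
    (hY : P * Y = Y) :
    frobeniusNorm (X - P * X) ^ 2 ≤ frobeniusNorm (X - Y) ^ 2 := by
  have hP_symm : Pᵀ = P := hP.isSelfAdjoint
  have hP_idem : P * P = P := hP.isIdempotentElem
  have horth : (X - P * X)ᵀ * (P * X - Y) = 0 := by
    calc (X - P * X)ᵀ * (P * X - Y)
        = (X - P * X)ᵀ * (P * (X - Y)) := by rw [Matrix.mul_sub P, hY]
      _ = (P * (X - P * X))ᵀ * (X - Y) := by
        rw [transpose_mul, hP_symm, Matrix.mul_assoc]
      _ = 0 := by
        rw [Matrix.mul_sub P, ← Matrix.mul_assoc, hP_idem, sub_self, transpose_zero,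
          Matrix.zero_mul]
  rw [← sub_add_sub_cancel X (P * X) Y, frobeniusNorm_add_sq_of_transpose_mul_eq_zero horth]
  exact le_add_of_nonneg_right (sq_nonneg _)

theorem exists_forall_frobeniusNorm_sub_mul_transpose_mul_sq_le {m : ℕ}
    (X : Matrix (Fin p) (Fin q) ℝ) (W₂ : Matrix (Fin p) (Fin m) ℝ) :
    ∃ W : Matrix (Fin p) (Fin m) ℝ, ∀ W₁ : Matrix (Fin m) (Fin p) ℝ,
      frobeniusNorm (X - W * Wᵀ * X) ^ 2 ≤ frobeniusNorm (X - W₂ * W₁ * X) ^ 2 := by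
  obtain ⟨W, hproj, hfix⟩ := exists_isStarProjection_mul_conjTranspose_mul_eq_self W₂
  rw [conjTranspose_eq_transpose_of_trivial] at hproj hfix
  refine ⟨W, fun W₁ ↦ frobeniusNorm_sub_mul_sq_le_of_isStarProjection hproj X ?_⟩
  rw [← Matrix.mul_assoc, ← Matrix.mul_assoc, hfix]

end FrobeniusNorm

/-- The infimum of the PCA-style symmetric autoencoder loss `‖X - W Wᵀ X‖_F²`
over all `n × m` matrices `W` equals the infimum of the linear autoencoder loss
`‖X - W₂ W₁ X‖_F²` over all pairs of an `n × m` matrix `W₂` and an `m × n`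
matrix `W₁`. -/
theorem pca_loss_eq_linear_autoencoder_loss
    (n N m : ℕ) (hn : 0 < n) (hN : 0 < N) (hm : 0 < m)
    (X : Matrix (Fin n) (Fin N) ℝ) :
    (⨅ W : Matrix (Fin n) (Fin m) ℝ, frobeniusNorm (X - W * Wᵀ * X) ^ 2) =
      ⨅ W₂ : Matrix (Fin n) (Fin m) ℝ, ⨅ W₁ : Matrix (Fin m) (Fin n) ℝ,
        frobeniusNorm (X - W₂ * W₁ * X) ^ 2 := by
  have bddBelow_of_nonneg {ι : Type} {f : ι → ℝ} (hf : ∀ i, 0 ≤ f i) :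
      BddBelow (Set.range f) := ⟨0, Set.forall_mem_range.mpr hf⟩
  apply le_antisymm
  · refine le_ciInf fun W₂ ↦ ?_
    obtain ⟨W, hW⟩ := exists_forall_frobeniusNorm_sub_mul_transpose_mul_sq_le X W₂
    exact le_ciInf fun W₁ ↦ ciInf_le_of_le (bddBelow_of_nonneg fun _ ↦ sq_nonneg _) W (hW W₁)
  · refine le_ciInf fun W ↦ ?_
    refine ciInf_le_of_le (bddBelow_of_nonneg fun _ ↦ Real.iInf_nonneg fun _ ↦ sq_nonneg _) W ?_
    exact ciInf_le (bddBelow_of_nonneg fun _ ↦ sq_nonneg _) Wᵀ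
end

section
/- Let W be an n×m real matrix with Wᵀ W invertible, and let λ > 0 be such that there exists a nonzero vector x ∈ ℝ^m with ‖W x‖ ≤ λ ‖x‖ (so λ is at least the smallest singular value of W). If λ · ‖W‖₂ < 1 (in particular, if the product of the largest and smallest singular values of W is less than 1), then ‖W‖₂ < ‖(Wᵀ W)⁻¹ Wᵀ‖₂; that is, the optimal linear encoder (Wᵀ W)⁻¹ Wᵀ has strictly larger operator norm than the decoder W. -/
open Matrix BigOperators

/-- The Euclidean norm of a vector in `ℝ^k`. -/
noncomputable def euclNorm {k : ℕ} (v : Fin k → ℝ) : ℝ :=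
  Real.sqrt (∑ i, (v i) ^ 2)

/-- The L2 operator norm of a real matrix: the operator norm of the induced
linear map between Euclidean spaces. -/
noncomputable def l2OpNorm {p q : ℕ} (A : Matrix (Fin p) (Fin q) ℝ) : ℝ :=
  ‖LinearMap.toContinuousLinearMap (Matrix.toEuclideanLin A)‖

section OperatorNorm

variable {𝕜 U V : Type*} [NontriviallyNormedField 𝕜]
  [SeminormedAddCommGroup U] [NormedSpace 𝕜 U] [NormedAddCommGroup V] [NormedSpace 𝕜 V]

theorem one_le_mul_opNorm_of_norm_le_mul_norm_apply {E : U →L[𝕜] V} {y : U} {c : ℝ}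
    (hy : E y ≠ 0) (hle : ‖y‖ ≤ c * ‖E y‖) : 1 ≤ c * ‖E‖ := by
  refine one_le_of_le_mul_right₀ (norm_pos_iff.mpr hy) ?_
  calc
    ‖E y‖ ≤ ‖E‖ * ‖y‖ := E.le_opNorm y
    _ ≤ ‖E‖ * (c * ‖E y‖) := by gcongr
    _ = c * ‖E‖ * ‖E y‖ := by ring

theorem encoder_opNorm_gt_decoder_general {D : V →L[𝕜] U} {E : U →L[𝕜] V}
    (hED : Function.LeftInverse E D) {c : ℝ} (hx : ∃ x, x ≠ 0 ∧ ‖D x‖ ≤ c * ‖x‖)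
    (hsmall : c * ‖D‖ < 1) : ‖D‖ < ‖E‖ := by
  obtain ⟨x, hx₀, hDx⟩ := hx
  have hc : 0 ≤ c :=
    nonneg_of_mul_nonneg_left ((norm_nonneg (D x)).trans hDx) (norm_pos_iff.mpr hx₀)
  have hE : 1 ≤ c * ‖E‖ :=
    one_le_mul_opNorm_of_norm_le_mul_norm_apply (y := D x) (by rwa [hED x]) (by rwa [hED x])
  exact lt_of_mul_lt_mul_left (hsmall.trans_le hE) hc

end OperatorNorm

section LeftInverse

variable {m n R : Type*} [Fintype m] [Fintype n] [DecidableEq m] [CommRing R]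

theorem inv_mul_mul_eq_one_of_isUnit_mul {A : Matrix m n R} {B : Matrix n m R}
    (hAB : IsUnit (A * B)) : (A * B)⁻¹ * A * B = 1 := by
  rw [Matrix.mul_assoc, nonsing_inv_mul _ ((isUnit_iff_isUnit_det _).mp hAB)]

theorem leftInverse_toLpLin_of_mul_eq_one [DecidableEq n] {A : Matrix m n R} {B : Matrix n m R}
    (hAB : A * B = 1) (p q : ENNReal) :
    Function.LeftInverse (toLpLin q p A) (toLpLin p q B) := fun x ↦ by
  rw [← LinearMap.comp_apply, ← toLpLin_mul, hAB, toLpLin_one, LinearMap.id_apply]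

end LeftInverse

theorem euclNorm_eq_norm_toLp {k : ℕ} (v : Fin k → ℝ) : euclNorm v = ‖WithLp.toLp 2 v‖ := by
  simp [euclNorm, EuclideanSpace.norm_eq]

/-- If `Wᵀ W` is invertible, `λ > 0` is at least the smallest singular value of
`W` (witnessed by a nonzero `x` with `‖W x‖ ≤ λ ‖x‖`), and `λ ⬝ ‖W‖₂ < 1`, then
the optimal linear encoder `(Wᵀ W)⁻¹ Wᵀ` has strictly larger operator norm than
the decoder `W`. -/
theorem encoder_opNorm_gt_decoder
    (n m : ℕ) (W : Matrix (Fin n) (Fin m) ℝ) (hinv : IsUnit (Wᵀ * W))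
    (lam : ℝ) (hlam : 0 < lam)
    (hx : ∃ x : Fin m → ℝ, x ≠ 0 ∧ euclNorm (W.mulVec x) ≤ lam * euclNorm x)
    (hsmall : lam * l2OpNorm W < 1) :
    l2OpNorm W < l2OpNorm ((Wᵀ * W)⁻¹ * Wᵀ) := by
  obtain ⟨x, hx₀, hWx⟩ := hx
  simp only [euclNorm_eq_norm_toLp] at hWx
  have hEW := leftInverse_toLpLin_of_mul_eq_one (inv_mul_mul_eq_one_of_isUnit_mul hinv) 2 2
  exact encoder_opNorm_gt_decoder_general hEW
    ⟨WithLp.toLp 2 x, (WithLp.toLp_eq_zero 2).not.mpr hx₀, hWx⟩ hsmall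
end

section
/- Let W_d be an n×m real matrix with W_dᵀ W_d invertible, and let W_e be an m×n real matrix. If the reconstruction matrix P = W_d W_e is symmetric (Pᵀ = P), idempotent (P P = P), and has rank m — i.e., P is the orthogonal projector onto the m-dimensional column space of W_d — then W_e = (W_dᵀ W_d)⁻¹ W_dᵀ. In other words, the only linear encoder that together with the decoder W_d realizes an orthogonal rank-m projection (as required to recover the principal components) is the pseudoinverse of W_d. -/
open Matrix

/-!
An idempotent `P = A B` whose rank is the number of columns of `A` forces `B A = 1`: since
`P = P P = (A B A) B`, the matrix `A B A` has full column rank. By the Orzech property of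
commutative rings its columns are then linearly independent, so it can be cancelled from
`(A B A) (B A) = P P A = P A = (A B A) 1`. If moreover `P` is Hermitian, then
`Aᴴ A B = (P A)ᴴ = Aᴴ`, so `Aᴴ A` has inverse `B Bᴴ`, and
`(Aᴴ A)⁻¹ Aᴴ = B (A B)ᴴ = B A B = B`.
-/

section FullColumnRank

variable {ι κ R : Type*} [Fintype κ] [CommSemiring R] [OrzechProperty R]

theorem mulVec_injective_iff_rank_eq_card [Nontrivial R] {A : Matrix ι κ R} :
    Function.Injective A.mulVec ↔ A.rank = Fintype.card κ := by
  rw [mulVec_injective_iff, linearIndependent_iff_card_eq_finrank_span, eq_comm,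
    rank_eq_finrank_span_cols, Set.finrank]

theorem mul_right_injective_of_rank_eq_card [Nontrivial R] {A : Matrix ι κ R}
    (hA : A.rank = Fintype.card κ) (μ : Type*) :
    Function.Injective fun X : Matrix κ μ R ↦ A * X := by
  cases isEmpty_or_nonempty μ
  · exact Function.injective_of_subsingleton _
  · exact mul_right_injective_iff_mulVec_injective.2 (mulVec_injective_iff_rank_eq_card.2 hA)

theorem mul_eq_one_of_isIdempotentElem_of_rank_eq_card [Fintype ι] [DecidableEq κ]
    {A : Matrix ι κ R} {B : Matrix κ ι R} (hidem : IsIdempotentElem (A * B))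
    (hrank : (A * B).rank = Fintype.card κ) : B * A = 1 := by
  nontriviality R
  have hABA : (A * B * A).rank = Fintype.card κ := by
    refine (rank_le_card_width _).antisymm ?_
    calc Fintype.card κ = (A * B * A * B).rank := by rw [Matrix.mul_assoc (A * B), hidem.eq, hrank]
      _ ≤ (A * B * A).rank := rank_mul_le_left _ _
  refine mul_right_injective_of_rank_eq_card hABA κ ?_
  calc A * B * A * (B * A) = (A * B) * (A * B) * A := by simp only [Matrix.mul_assoc]
    _ = A * B * A * (1 : Matrix κ κ R) := by
        rw [hidem.eq, Matrix.mul_one]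

end FullColumnRank

section HermitianProjection

variable {ι κ R : Type*} [Fintype ι] [Fintype κ]

theorem conjTranspose_mul_self_mul_eq_conjTranspose [NonUnitalSemiring R] [StarRing R]
    {A : Matrix ι κ R} {B : Matrix κ ι R} (hABA : A * B * A = A) (hAB : (A * B).IsHermitian) :
    Aᴴ * A * B = Aᴴ :=
  calc Aᴴ * A * B = Aᴴ * (A * B)ᴴ := by rw [hAB.eq, Matrix.mul_assoc]
    _ = Aᴴ := by rw [← conjTranspose_mul, hABA]

variable [DecidableEq κ] [CommRing R] [StarRing R] {A : Matrix ι κ R} {B : Matrix κ ι R}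

theorem inv_conjTranspose_mul_self_of_isHermitian (hBA : B * A = 1) (hAB : (A * B).IsHermitian) :
    (Aᴴ * A)⁻¹ = B * Bᴴ := by
  have hABA : A * B * A = A := by rw [Matrix.mul_assoc, hBA, Matrix.mul_one]
  apply inv_eq_right_inv
  calc Aᴴ * A * (B * Bᴴ) = Aᴴ * Bᴴ := by
        rw [← Matrix.mul_assoc, conjTranspose_mul_self_mul_eq_conjTranspose hABA hAB]
    _ = 1 := by rw [← conjTranspose_mul, hBA, conjTranspose_one]

theorem encoder_eq_pseudoinverse_of_orthogonal_projection_general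
    (hsymm : (A * B).IsHermitian) (hidem : IsIdempotentElem (A * B))
    (hrank : (A * B).rank = Fintype.card κ) : B = (Aᴴ * A)⁻¹ * Aᴴ := by
  have hBA : B * A = 1 := mul_eq_one_of_isIdempotentElem_of_rank_eq_card hidem hrank
  symm
  calc (Aᴴ * A)⁻¹ * Aᴴ = B * (A * B)ᴴ := by
        rw [inv_conjTranspose_mul_self_of_isHermitian hBA hsymm, conjTranspose_mul,
          Matrix.mul_assoc]
    _ = B := by rw [hsymm.eq, ← Matrix.mul_assoc, hBA, Matrix.one_mul]

end HermitianProjection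

/-- If the decoder `W_d` has invertible Gram matrix `W_dᵀ W_d` and the
reconstruction matrix `W_d W_e` is symmetric, idempotent and of rank `m`
(i.e. it is the orthogonal projector onto the `m`-dimensional column space of
`W_d`), then the encoder must be the pseudoinverse `(W_dᵀ W_d)⁻¹ W_dᵀ`. -/
theorem encoder_eq_pseudoinverse_of_orthogonal_projection
    (n m : ℕ) (Wd : Matrix (Fin n) (Fin m) ℝ) (hinv : IsUnit (Wdᵀ * Wd))
    (We : Matrix (Fin m) (Fin n) ℝ)
    (hsymm : (Wd * We)ᵀ = Wd * We)
    (hidem : (Wd * We) * (Wd * We) = Wd * We)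
    (hrank : (Wd * We).rank = m) :
    We = (Wdᵀ * Wd)⁻¹ * Wdᵀ := by
  simp only [← conjTranspose_eq_transpose_of_trivial] at hsymm ⊢
  exact encoder_eq_pseudoinverse_of_orthogonal_projection_general hsymm hidem (by simpa using hrank)
end
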